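/- Let P ∈ OPT and let c be a point such that c = h(e) = t(e') for two non-degenerate edges e = e_i(P) and e' = e_j(P) of P with i ≠ j. If e is not contained in ∂C* or e' is not contained in ∂C*, then P is accountable with respect to the charging option (v_i, h) or P is accountable with respect to the charging option (v_j, t). -/

import Mathlib

open scoped Classical

noncomputable section

/-- A point of the Euclidean plane. -/
abbrev Pt : Type := ℝ × ℝ

/-- Dot product in the plane. -/
def dot2 (a b : Pt) : ℝ := a.1 * b.1 + a.2 * b.2

/-- Clockwise orthogonal rotation `v^⊥` of a vector. -/
def perp2 (w : Pt) : Pt := (w.2, -w.1)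

/-- Cross product (determinant) of two plane vectors. -/
def cross2 (a b : Pt) : ℝ := a.1 * b.2 - a.2 * b.1

/-- The hypotheses on the family of direction-defining vectors `v₁, …, v_d`
(extended to all integer indices by `v_{i+d} = -v_i`, hence `2d`-periodicity):
`d ≥ 2`, `v 1 = (0,1)`, pairwise linear independence of `v₁, …, v_d`,
`v₂, …, v_d` have negative first coordinate, and `v₂, …, v_d`
are ordered by strictly decreasing slope. -/
def DirOK (d : ℕ) (v : ℤ → Pt) : Prop :=
  2 ≤ d ∧
  v 1 = ((0 : ℝ), (1 : ℝ)) ∧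
  (∀ i : ℤ, v (i + (d : ℤ)) = -v i) ∧
  (∀ i j : ℤ, 1 ≤ i → i < j → j ≤ (d : ℤ) → cross2 (v i) (v j) ≠ 0) ∧
  (∀ i : ℤ, 2 ≤ i → i ≤ (d : ℤ) → (v i).1 < 0) ∧
  (∀ i j : ℤ, 2 ≤ i → i < j → j ≤ (d : ℤ) → (v j).2 / (v j).1 < (v i).2 / (v i).1)

/-- The open polygon `P = {x : ⟨x, v_i^⊥⟩ < p_i for all i ∈ {1,…,2d}}`. -/
def DOPset (d : ℕ) (v : ℤ → Pt) (p : ℤ → ℝ) : Set Pt :=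
  {x : Pt | ∀ i ∈ Finset.Icc (1 : ℤ) (2 * (d : ℤ)), dot2 x (perp2 (v i)) < p i}

/-- The edge `e_i(P) = cl(P) ∩ {x : ⟨x, v_i^⊥⟩ = p_i}`. -/
def edgeOf (d : ℕ) (v : ℤ → Pt) (p : ℤ → ℝ) (i : ℤ) : Set Pt :=
  closure (DOPset d v p) ∩ {x : Pt | dot2 x (perp2 (v i)) = p i}

/-- `p` (a `2d`-periodic family of offsets) defines a `d`-DOP: the corresponding open
set is nonempty and bounded, and every constraint is tight (each edge is nonempty). -/
def IsDOP (d : ℕ) (v : ℤ → Pt) (p : ℤ → ℝ) : Prop :=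
  (DOPset d v p).Nonempty ∧
  Bornology.IsBounded (DOPset d v p) ∧
  (∀ i : ℤ, p (i + 2 * (d : ℤ)) = p i) ∧
  ∀ i ∈ Finset.Icc (1 : ℤ) (2 * (d : ℤ)), (edgeOf d v p i).Nonempty

/-- `te` and `he` are the tail and the head of the (possibly degenerate) segment `e`,
oriented along `v i`:  `e = [te, he]` and `he - te` is a nonnegative multiple of `v i`. -/
def IsTH (v : ℤ → Pt) (i : ℤ) (e : Set Pt) (te he : Pt) : Prop :=
  e = segment ℝ te he ∧ ∃ c : ℝ, 0 ≤ c ∧ he - te = c • v i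

/-- The pair (tail, head) of the edge `e_i(P)` (chosen by the characterizing property). -/
def THpair (d : ℕ) (v : ℤ → Pt) (p : ℤ → ℝ) (i : ℤ) : Pt × Pt :=
  if h : ∃ th : Pt × Pt, IsTH v i (edgeOf d v p i) th.1 th.2 then h.choose
  else (0 : Pt × Pt)

/-- The tail `t(e_i(P))` of the edge `e_i(P)`. -/
def tlPt (d : ℕ) (v : ℤ → Pt) (p : ℤ → ℝ) (i : ℤ) : Pt := (THpair d v p i).1

/-- The head `h(e_i(P))` of the edge `e_i(P)`. -/
def hdPt (d : ℕ) (v : ℤ → Pt) (p : ℤ → ℝ) (i : ℤ) : Pt := (THpair d v p i).2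

/-- The relative interior of the edge `e_i(P)`: the segment minus its two endpoints. -/
def relintE (d : ℕ) (v : ℤ → Pt) (p : ℤ → ℝ) (i : ℤ) : Set Pt :=
  segment ℝ (tlPt d v p i) (hdPt d v p i) \ {tlPt d v p i, hdPt d v p i}

/-- A family of `d`-DOPs is independent: members are pairwise distinct (as sets)
and no two of them meet as open sets. -/
def Indep (d : ℕ) (v : ℤ → Pt) (OPT : Set (ℤ → ℝ)) : Prop :=
  ∀ p ∈ OPT, ∀ q ∈ OPT, p ≠ q →
    DOPset d v p ≠ DOPset d v q ∧ DOPset d v p ∩ DOPset d v q = ∅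

/-- `P` sees `P'` with respect to the charging option `(v_i, a)`, where the Boolean
`a = true` stands for the option `h` (head) and `a = false` for `t` (tail):
the edge `e = e_i(P)` is non-degenerate and `(¬a)(e') ∈ relint(e) ∪ {a(e)}`
where `e' = e_{i+d}(P')`. -/
def SeesOpt (d : ℕ) (v : ℤ → Pt) (p p' : ℤ → ℝ) (i : ℤ) (a : Bool) : Prop :=
  tlPt d v p i ≠ hdPt d v p i ∧
  (if a then tlPt d v p' (i + (d : ℤ)) else hdPt d v p' (i + (d : ℤ))) ∈
    relintE d v p i ∪ {if a then hdPt d v p i else tlPt d v p i}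

/-- `P ∈ OPT` is accountable with respect to the charging option `(v_i, a)`. -/
def Accountable (d : ℕ) (v : ℤ → Pt) (OPT : Set (ℤ → ℝ)) (p : ℤ → ℝ) (i : ℤ)
    (a : Bool) : Prop :=
  ∃ p' ∈ OPT, SeesOpt d v p p' i a

/-- Condition (E4): for every `P ∈ OPT` and every non-degenerate edge `e` of `P`,
`relint(e)` meets the boundary of another polygon of `OPT` or the boundary of `C*`. -/
def E4cond (d : ℕ) (v : ℤ → Pt) (OPT : Set (ℤ → ℝ)) (Cstar : Set Pt) : Prop :=
  ∀ p ∈ OPT, ∀ i ∈ Finset.Icc (1 : ℤ) (2 * (d : ℤ)),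
    tlPt d v p i ≠ hdPt d v p i →
    (∃ q ∈ OPT, DOPset d v q ≠ DOPset d v p ∧
      (relintE d v p i ∩ frontier (DOPset d v q)).Nonempty) ∨
    (relintE d v p i ∩ frontier Cstar).Nonempty

/-- A (closed) parallelogram in the plane. -/
def IsParallelogram (C : Set Pt) : Prop :=
  ∃ a u w : Pt, cross2 u w ≠ 0 ∧
    C = (fun st : ℝ × ℝ => a + st.1 • u + st.2 • w) ''
      {st : ℝ × ℝ | st.1 ∈ Set.Icc (0 : ℝ) 1 ∧ st.2 ∈ Set.Icc (0 : ℝ) 1}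

/-- `P` is a corner polygon in `C*`: all of its edges except exactly one are
contained in `∂C*`. -/
def CornerPoly (d : ℕ) (v : ℤ → Pt) (p : ℤ → ℝ) (Cstar : Set Pt) : Prop :=
  ∃ i ∈ Finset.Icc (1 : ℤ) (2 * (d : ℤ)),
    ¬ edgeOf d v p i ⊆ frontier Cstar ∧
    ∀ j ∈ Finset.Icc (1 : ℤ) (2 * (d : ℤ)), j ≠ i → edgeOf d v p j ⊆ frontier Cstar

/-!
Suppose that `P` is accountable for neither option at `c`. By (E4) the relative interior of each of
the two edges meets another polygon or `∂C*`. A polygon `Q` touching `relint e` lies beyond the line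
of `e`, and since `P` does not see it towards `c`, its opposite edge runs past `c`, so that `cl Q`
contains points of this line on both sides of `c`. If instead `relint e` meets `∂C*`, then the line
of `e` supports `C*`, whence `e ⊆ ∂C*`.

The lines of `e` and `e'` cross at `c`, so a polygon with points of the line of `e'` on both sides
of `c` has points strictly on each side of the line of `e`, and conversely. Hence such a polygon
neither lies behind both edges nor fits into a `C*` supported by the line of the other edge. If
distinct polygons `Q` and `R` lie behind `e` and `e'`, then `cl Q` fills the outer half-plane of `e`
near `c`, which forces `R`, being disjoint from `Q`, to the inner side of the line of `e`. The only
case left is that both edges lie in `∂C*`.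
-/

open Set Topology

section Line

variable {E : Type*} [AddCommGroup E] [Module ℝ E]

/-- `S` straddles `c` along `w` if `S` contains points of the line through `c` with direction `w`
on both sides of `c`. This expresses that an edge, or a polygon behind it, continues past `c`. -/
def Straddles (S : Set E) (c w : E) : Prop :=
  ∃ s < (0 : ℝ), ∃ t > (0 : ℝ), c + s • w ∈ S ∧ c + t • w ∈ S

lemma add_smul_eq_lineMap (x w : E) (r : ℝ) : x + r • w = AffineMap.lineMap x (x + w) r := by
  rw [AffineMap.lineMap_apply, vsub_eq_sub, add_sub_cancel_left, vadd_eq_add, add_comm]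

lemma image_add_smul_segment (x w : E) (s t : ℝ) :
    (fun r : ℝ => x + r • w) '' segment ℝ s t = segment ℝ (x + s • w) (x + t • w) := by
  simp only [add_smul_eq_lineMap, image_segment]

lemma add_smul_mem_openSegment (x w : E) {s r t : ℝ} (hsr : s < r) (hrt : r < t) :
    x + r • w ∈ openSegment ℝ (x + s • w) (x + t • w) := by
  simp only [add_smul_eq_lineMap, ← image_openSegment]
  rw [openSegment_eq_Ioo (hsr.trans hrt)]
  exact mem_image_of_mem _ ⟨hsr, hrt⟩

namespace Straddles

variable {S S' : Set E} {c w : E}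

lemma mono (h : Straddles S c w) (hSS' : S ⊆ S') : Straddles S' c w := by
  obtain ⟨s, hs, t, ht, hsS, htS⟩ := h
  exact ⟨s, hs, t, ht, hSS' hsS, hSS' htS⟩

lemma neg (h : Straddles S c w) : Straddles S c (-w) := by
  obtain ⟨s, hs, t, ht, hsS, htS⟩ := h
  exact ⟨-t, neg_lt_zero.2 ht, -s, neg_pos.2 hs, by simpa using htS, by simpa using hsS⟩

lemma eventually_add_smul_mem (h : Straddles S c w) (hS : Convex ℝ S) (α : ℝ) :
    ∀ᶠ ε in 𝓝[>] (0 : ℝ), c + (ε * α) • w ∈ S := by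
  obtain ⟨s, hs, t, ht, hsS, htS⟩ := h
  have hcont : Continuous fun ε : ℝ => ε * α := by fun_prop
  have hsmall : ∀ᶠ ε in 𝓝 (0 : ℝ), ε * α ∈ Ioo s t :=
    hcont.continuousAt.eventually_mem (Ioo_mem_nhds (by simpa using hs) (by simpa using ht))
  filter_upwards [nhdsWithin_le_nhds hsmall] with ε hε
  exact hS.openSegment_subset hsS htS (add_smul_mem_openSegment c w hε.1 hε.2)

lemma mem (h : Straddles S c w) (hS : Convex ℝ S) : c ∈ S := by
  simpa using (h.eventually_add_smul_mem hS 0).exists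

lemma eventually_add_smul_add_mem (h : Straddles S c w) (hS : Convex ℝ S) {z : E} (hz : z ∈ S)
    (α : ℝ) {β : ℝ} (hβ : 0 ≤ β) :
    ∀ᶠ ε in 𝓝[>] (0 : ℝ), c + ε • (α • w + β • (z - c)) ∈ S := by
  have hcont : Continuous fun ε : ℝ => ε * (2 * β) := by fun_prop
  have hsmall : ∀ᶠ ε in 𝓝 (0 : ℝ), ε * (2 * β) < 1 :=
    hcont.continuousAt.eventually_lt continuousAt_const (by simp)
  filter_upwards [h.eventually_add_smul_mem hS (2 * α), nhdsWithin_le_nhds hsmall,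
    self_mem_nhdsWithin] with ε hw hε1 (hε0 : 0 < ε)
  have hz' : c + (ε * (2 * β)) • (z - c) ∈ S :=
    hS.add_smul_sub_mem (h.mem hS) hz ⟨by positivity, hε1.le⟩
  convert hS hw hz' (a := 1 / 2) (b := 1 / 2) (by norm_num) (by norm_num) (by norm_num) using 1
  module

end Straddles

lemma exists_eq_segment_of_subset_line [TopologicalSpace E] [IsTopologicalAddGroup E]
    [ContinuousSMul ℝ E] [T2Space E] {K : Set E} {x w : E} (hK : IsCompact K) (hKc : Convex ℝ K)
    (hKn : K.Nonempty) (hw : w ≠ 0) (hline : ∀ y ∈ K, ∃ r : ℝ, y = x + r • w) :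
    ∃ a b : E, K = segment ℝ a b ∧ ∃ r : ℝ, 0 ≤ r ∧ b - a = r • w := by
  set φ : ℝ → E := fun r => x + r • w
  have himage : φ '' (φ ⁻¹' K) = K := by
    refine image_preimage_eq_of_subset fun y hy => ?_
    obtain ⟨r, rfl⟩ := hline y hy
    exact ⟨r, rfl⟩
  have hcompact : IsCompact (φ ⁻¹' K) :=
    ((Homeomorph.addLeft x).isClosedEmbedding.comp
      (isClosedEmbedding_smul_left hw)).isCompact_preimage hK
  have hconvex : Convex ℝ (φ ⁻¹' K) :=
    (hKc.translate_preimage_right x).is_linear_preimage (IsLinearMap.isLinearMap_smul' w)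
  have hnonempty : (φ ⁻¹' K).Nonempty := by
    rw [← image_nonempty (f := φ), himage]
    exact hKn
  have hIcc := eq_Icc_of_connected_compact ⟨hnonempty, hconvex.isPreconnected⟩ hcompact
  have hle : sInf (φ ⁻¹' K) ≤ sSup (φ ⁻¹' K) := by
    rw [← nonempty_Icc, ← hIcc]
    exact hnonempty
  refine ⟨φ (sInf (φ ⁻¹' K)), φ (sSup (φ ⁻¹' K)), ?_, _, sub_nonneg.2 hle, ?_⟩
  · rw [← image_add_smul_segment, segment_eq_Icc hle, ← hIcc, himage]
  · simp only [φ]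
    module

end Line

section CrossProduct

lemma dot2_perp2 (x w : Pt) : dot2 x (perp2 w) = cross2 x w := by
  simp only [dot2, perp2, cross2]
  ring

lemma isLinearMap_cross2 (w : Pt) : IsLinearMap ℝ (cross2 · w) where
  map_add x y := by simp only [cross2, Prod.fst_add, Prod.snd_add]; ring
  map_smul r x := by simp only [cross2, Prod.smul_fst, Prod.smul_snd, smul_eq_mul]; ring

lemma continuous_cross2 (w : Pt) : Continuous (cross2 · w) := by
  unfold cross2
  fun_prop

lemma cross2_neg_right (x w : Pt) : cross2 x (-w) = -cross2 x w := by
  simp only [cross2, Prod.fst_neg, Prod.snd_neg]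
  ring

lemma cross2_smul_right (x w : Pt) (r : ℝ) : cross2 x (r • w) = r * cross2 x w := by
  simp only [cross2, Prod.smul_fst, Prod.smul_snd, smul_eq_mul]
  ring

lemma cross2_swap (a b : Pt) : cross2 a b = -cross2 b a := by
  simp only [cross2]
  ring

lemma cross2_sub_left (x y w : Pt) : cross2 (x - y) w = cross2 x w - cross2 y w :=
  (isLinearMap_cross2 w).map_sub x y

lemma cross2_add_smul (x u w : Pt) (r : ℝ) :
    cross2 (x + r • u) w = cross2 x w + r * cross2 u w := by
  rw [(isLinearMap_cross2 w).map_add, (isLinearMap_cross2 w).map_smul, smul_eq_mul]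

lemma eq_smul_add_smul_of_cross2_ne_zero {a b : Pt} (h : cross2 a b ≠ 0) (u : Pt) :
    u = (cross2 u b / cross2 a b) • a + (cross2 u a / cross2 b a) • b := by
  rw [cross2_swap b a, div_neg, ← neg_div, div_eq_inv_mul, div_eq_inv_mul, mul_smul, mul_smul,
    ← smul_add, eq_inv_smul_iff₀ h]
  ext <;> simp only [cross2, Prod.fst_add, Prod.snd_add, Prod.smul_fst, Prod.smul_snd,
    smul_eq_mul] <;> ring

lemma exists_eq_smul_of_cross2_eq_zero {u w : Pt} (hw : w ≠ 0) (h : cross2 u w = 0) :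
    ∃ r : ℝ, u = r • w := by
  have hperp : cross2 w (perp2 w) ≠ 0 := by
    contrapose! hw
    simp only [cross2, perp2] at hw
    have hsq : w.1 * w.1 + w.2 * w.2 = 0 := by linear_combination -hw
    exact Prod.ext_iff.2 (mul_self_add_mul_self_eq_zero.1 hsq)
  have hu := eq_smul_add_smul_of_cross2_ne_zero hperp u
  rw [h, zero_div, zero_smul, add_zero] at hu
  exact ⟨_, hu⟩

lemma cross2_le_of_mem_closure {S : Set Pt} {w x : Pt} {m : ℝ} (h : ∀ y ∈ S, cross2 y w ≤ m)
    (hx : x ∈ closure S) : cross2 x w ≤ m :=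
  le_on_closure h (continuous_cross2 w).continuousOn continuousOn_const hx

lemma le_cross2_of_mem_closure {S : Set Pt} {w x : Pt} {m : ℝ} (h : ∀ y ∈ S, m ≤ cross2 y w)
    (hx : x ∈ closure S) : m ≤ cross2 x w :=
  le_on_closure h continuousOn_const (continuous_cross2 w).continuousOn hx

lemma mem_frontier_of_forall_cross2_le {C : Set Pt} {x z w : Pt} (hx : x ∈ C)
    (hle : ∀ y ∈ C, cross2 y w ≤ cross2 x w) (hz : cross2 z w < cross2 x w) :
    x ∈ frontier C := by
  refine ⟨subset_closure hx, fun hxint => ?_⟩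
  have hcont : Continuous fun ε : ℝ => x + ε • (x - z) := by fun_prop
  have hnear : ∀ᶠ ε in 𝓝[>] (0 : ℝ), x + ε • (x - z) ∈ C :=
    nhdsWithin_le_nhds <|
      hcont.continuousAt.eventually_mem (by simpa using mem_interior_iff_mem_nhds.1 hxint)
  obtain ⟨ε, hεC, hε : 0 < ε⟩ := (hnear.and self_mem_nhdsWithin).exists
  have hεle := hle _ hεC
  rw [cross2_add_smul, cross2_sub_left] at hεle
  linarith [mul_pos hε (sub_pos.2 hz)]

end CrossProduct

namespace Straddles

variable {S S' C : Set Pt} {c w w' z u : Pt}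

lemma exists_cross2_lt (h : Straddles (closure S) c w) (hw : cross2 w w' ≠ 0) :
    ∃ y ∈ S, cross2 y w' < cross2 c w' := by
  by_contra! hge
  obtain ⟨s, hs, t, ht, hsS, htS⟩ := h
  have hs' := le_cross2_of_mem_closure hge hsS
  have ht' := le_cross2_of_mem_closure hge htS
  rw [cross2_add_smul, le_add_iff_nonneg_right] at hs' ht'
  exact hw (le_antisymm (nonpos_of_mul_nonneg_right hs' hs) (nonneg_of_mul_nonneg_right ht' ht))

lemma exists_lt_cross2 (h : Straddles (closure S) c w) (hw : cross2 w w' ≠ 0) :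
    ∃ y ∈ S, cross2 c w' < cross2 y w' := by
  simpa only [cross2_neg_right, neg_lt_neg_iff] using
    h.exists_cross2_lt (w' := -w') (by rwa [cross2_neg_right, neg_ne_zero])

/-- A convex set straddling `c` along `w` looks like a half-plane near `c`. -/
lemma eventually_mem_of_cross2_nonneg (h : Straddles S c w) (hS : Convex ℝ S) (hz : z ∈ S)
    (hcz : cross2 c w < cross2 z w) (hu : 0 ≤ cross2 u w) :
    ∀ᶠ ε in 𝓝[>] (0 : ℝ), c + ε • u ∈ S := by
  have hpos : 0 < cross2 (z - c) w := by
    rw [cross2_sub_left]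
    exact sub_pos.2 hcz
  have hne : cross2 w (z - c) ≠ 0 := by
    rw [cross2_swap]
    exact neg_ne_zero.2 hpos.ne'
  rw [eq_smul_add_smul_of_cross2_ne_zero hne u]
  exact h.eventually_add_smul_add_mem hS hz _ (div_nonneg hu hpos.le)

lemma cross2_lt_of_disjoint (h : Straddles S c w) (hS : Convex ℝ S) (hz : z ∈ S)
    (hcz : cross2 c w < cross2 z w) (hS' : Convex ℝ S') (hS'o : IsOpen S') (hdis : Disjoint S S')
    (hc : c ∈ closure S') : ∀ y ∈ S', cross2 y w < cross2 c w := by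
  intro y hy
  by_contra! hle
  have hmem := h.eventually_mem_of_cross2_nonneg hS hz hcz (u := y - c)
    (by rw [cross2_sub_left]; exact sub_nonneg.2 hle)
  obtain ⟨ε, hεS, hε0, hε1⟩ := (hmem.and (Ioo_mem_nhdsGT one_pos)).exists
  refine hdis.ne_of_mem hεS (b := c + ε • (y - c)) ?_ rfl
  rw [← hS'o.interior_eq] at hy ⊢
  exact hS'.add_smul_sub_mem_interior' hc hy ⟨hε0, hε1.le⟩

lemma cross2_le_of_notMem_interior (h : Straddles C c w) (hC : Convex ℝ C) (hz : z ∈ interior C)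
    (hcz : cross2 z w < cross2 c w) (hc : c ∉ interior C) : ∀ y ∈ C, cross2 y w ≤ cross2 c w := by
  intro y hy
  by_contra! hlt
  have hmem := h.eventually_mem_of_cross2_nonneg hC hy hlt (u := c - z)
    (by rw [cross2_sub_left]; exact (sub_pos.2 hcz).le)
  obtain ⟨ε, hεC, hε : 0 < ε⟩ := (hmem.and self_mem_nhdsWithin).exists
  have hseg : c ∈ openSegment ℝ z (c + ε • (c - z)) := by
    simpa using add_smul_mem_openSegment c (c - z) (s := -1) (r := 0) (by norm_num) hε
  exact hc (hC.openSegment_interior_self_subset_interior hz hεC hseg)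

end Straddles

section Polygons

variable {d : ℕ} {v : ℤ → Pt} {p q : ℤ → ℝ} {i j : ℤ} {x : Pt}

lemma mem_DOPset :
    x ∈ DOPset d v p ↔ ∀ k ∈ Finset.Icc (1 : ℤ) (2 * (d : ℤ)), cross2 x (v k) < p k := by
  simp only [DOPset, dot2_perp2, mem_ofPred_eq]

lemma mem_edgeOf :
    x ∈ edgeOf d v p i ↔ x ∈ closure (DOPset d v p) ∧ cross2 x (v i) = p i := by
  simp only [edgeOf, dot2_perp2, mem_inter_iff, mem_ofPred_eq]

lemma DOPset_eq_iInter : DOPset d v p =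
    ⋂ k ∈ Finset.Icc (1 : ℤ) (2 * (d : ℤ)), {x | cross2 x (v k) < p k} := by
  ext x
  simp only [mem_DOPset, mem_iInter, mem_ofPred_eq]

lemma isOpen_DOPset (d : ℕ) (v : ℤ → Pt) (p : ℤ → ℝ) : IsOpen (DOPset d v p) := by
  rw [DOPset_eq_iInter]
  exact isOpen_biInter_finset fun k _ => isOpen_lt (continuous_cross2 (v k)) continuous_const

lemma convex_DOPset (d : ℕ) (v : ℤ → Pt) (p : ℤ → ℝ) : Convex ℝ (DOPset d v p) := by
  rw [DOPset_eq_iInter]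
  exact convex_iInter₂ fun k _ => convex_halfSpace_lt (isLinearMap_cross2 (v k)) (p k)

lemma convex_edgeOf (d : ℕ) (v : ℤ → Pt) (p : ℤ → ℝ) (i : ℤ) : Convex ℝ (edgeOf d v p i) := by
  simp only [edgeOf, dot2_perp2]
  exact (convex_DOPset d v p).closure.inter (convex_hyperplane (isLinearMap_cross2 (v i)) (p i))

lemma isClosed_edgeOf (d : ℕ) (v : ℤ → Pt) (p : ℤ → ℝ) (i : ℤ) : IsClosed (edgeOf d v p i) := by
  simp only [edgeOf, dot2_perp2]
  exact isClosed_closure.inter (isClosed_eq (continuous_cross2 (v i)) continuous_const)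

lemma Indep.disjoint {OPT : Set (ℤ → ℝ)} (h : Indep d v OPT) (hp : p ∈ OPT) (hq : q ∈ OPT)
    (hne : p ≠ q) : Disjoint (DOPset d v p) (DOPset d v q) :=
  disjoint_iff_inter_eq_empty.2 (h p hp q hq hne).2

lemma IsTH.exists_endpoints_eq {e : Set Pt} {te he : Pt} (h : IsTH v i e te he) (hx : x ∈ e) :
    ∃ a b : ℝ, 0 ≤ a ∧ 0 ≤ b ∧ te = x - a • v i ∧ he = x + b • v i := by
  obtain ⟨rfl, l, hl, hlv⟩ := h
  obtain rfl : he = te + l • v i := by rw [← hlv, add_sub_cancel]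
  have himage := image_add_smul_segment te (v i) 0 l
  rw [zero_smul, add_zero, segment_eq_Icc hl] at himage
  rw [← himage] at hx
  obtain ⟨r, hr, rfl⟩ := hx
  exact ⟨r, l - r, hr.1, sub_nonneg.2 hr.2, by module, by module⟩

lemma isTH_tlPt_hdPt (h : ∃ te he : Pt, IsTH v i (edgeOf d v p i) te he) :
    IsTH v i (edgeOf d v p i) (tlPt d v p i) (hdPt d v p i) := by
  have hpair : ∃ th : Pt × Pt, IsTH v i (edgeOf d v p i) th.1 th.2 := Prod.exists.2 h
  rw [tlPt, hdPt, THpair, dif_pos hpair]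
  exact hpair.choose_spec

lemma relintE_eq_openSegment (hne : tlPt d v p i ≠ hdPt d v p i) :
    relintE d v p i = openSegment ℝ (tlPt d v p i) (hdPt d v p i) := by
  ext x
  simp only [relintE, mem_sdiff, mem_insert_iff, mem_singleton_iff, not_or]
  refine ⟨fun ⟨hx, hxt, hxh⟩ => mem_openSegment_of_ne_left_right (Ne.symm hxt) (Ne.symm hxh) hx,
    fun hx => ⟨openSegment_subset_segment ℝ _ _ hx, ?_, ?_⟩⟩
  · rintro rfl
    exact hne (left_mem_openSegment_iff.1 hx)
  · rintro rfl
    exact hne (right_mem_openSegment_iff.1 hx)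

namespace IsDOP

lemma d_pos (hP : IsDOP d v p) : 0 < d := by
  rw [Nat.pos_iff_ne_zero]
  rintro rfl
  have huniv : DOPset 0 v p = univ := by simp [eq_univ_iff_forall, mem_DOPset]
  exact NormedSpace.unbounded_univ ℝ Pt (huniv ▸ hP.2.1)

lemma exists_index_eq (hP : IsDOP d v p) (hv : Function.Antiperiodic v (d : ℤ)) (i : ℤ) :
    ∃ k ∈ Finset.Icc (1 : ℤ) (2 * (d : ℤ)), v i = v k ∧ p i = p k := by
  have hperiodic : Function.Periodic (fun k => (v k, p k)) (2 * (d : ℤ)) := fun k =>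
    Prod.ext (hv.periodic_two_mul k) (hP.2.2.1 k)
  obtain ⟨k, hk, hik⟩ :=
    hperiodic.exists_mem_Ioc (mul_pos two_pos (Int.natCast_pos.2 hP.d_pos)) i 0
  refine ⟨k, Finset.mem_Icc.2 ?_, Prod.ext_iff.1 hik⟩
  rw [mem_Ioc] at hk
  omega

lemma cross2_lt (hP : IsDOP d v p) (hv : Function.Antiperiodic v (d : ℤ)) (i : ℤ)
    (hx : x ∈ DOPset d v p) : cross2 x (v i) < p i := by
  obtain ⟨k, hk, hvk, hpk⟩ := hP.exists_index_eq hv i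
  rw [hvk, hpk]
  exact mem_DOPset.1 hx k hk

lemma edgeOf_nonempty (hP : IsDOP d v p) (hv : Function.Antiperiodic v (d : ℤ)) (i : ℤ) :
    (edgeOf d v p i).Nonempty := by
  obtain ⟨k, hk, hvk, hpk⟩ := hP.exists_index_eq hv i
  simpa only [edgeOf, hvk, hpk] using hP.2.2.2 k hk

lemma direction_ne_zero (hP : IsDOP d v p) (hv : Function.Antiperiodic v (d : ℤ)) (i : ℤ) :
    v i ≠ 0 := by
  intro hvi
  obtain ⟨z, hz⟩ := hP.1
  obtain ⟨y, hy⟩ := hP.edgeOf_nonempty hv i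
  have hlt := hP.cross2_lt hv i hz
  rw [← (mem_edgeOf.1 hy).2, hvi] at hlt
  simp [cross2] at hlt

lemma isTH (hP : IsDOP d v p) (hv : Function.Antiperiodic v (d : ℤ)) (i : ℤ) :
    IsTH v i (edgeOf d v p i) (tlPt d v p i) (hdPt d v p i) := by
  have hvi := hP.direction_ne_zero hv i
  obtain ⟨x, hx⟩ := hP.edgeOf_nonempty hv i
  have hcompact : IsCompact (edgeOf d v p i) :=
    hP.2.1.isCompact_closure.of_isClosed_subset (isClosed_edgeOf d v p i) inter_subset_left
  refine isTH_tlPt_hdPt (exists_eq_segment_of_subset_line (x := x) hcompact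
    (convex_edgeOf d v p i) ⟨x, hx⟩ hvi fun y hy => ?_)
  have hzero : cross2 (y - x) (v i) = 0 := by
    rw [cross2_sub_left, (mem_edgeOf.1 hy).2, (mem_edgeOf.1 hx).2, sub_self]
  obtain ⟨r, hr⟩ := exists_eq_smul_of_cross2_eq_zero hvi hzero
  exact ⟨r, by rw [← hr, add_sub_cancel]⟩

lemma tlPt_mem (hP : IsDOP d v p) (hv : Function.Antiperiodic v (d : ℤ)) (i : ℤ) :
    tlPt d v p i ∈ edgeOf d v p i := by
  rw [(hP.isTH hv i).1]
  exact left_mem_segment ℝ _ _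

lemma hdPt_mem (hP : IsDOP d v p) (hv : Function.Antiperiodic v (d : ℤ)) (i : ℤ) :
    hdPt d v p i ∈ edgeOf d v p i := by
  rw [(hP.isTH hv i).1]
  exact right_mem_segment ℝ _ _

lemma exists_endpoints_eq_of_mem_relintE (hP : IsDOP d v p)
    (hv : Function.Antiperiodic v (d : ℤ)) (hx : x ∈ relintE d v p i) :
    ∃ a b : ℝ, 0 < a ∧ 0 < b ∧ tlPt d v p i = x - a • v i ∧ hdPt d v p i = x + b • v i := by
  obtain ⟨hxseg, hxne⟩ := hx
  rw [← (hP.isTH hv i).1] at hxseg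
  obtain ⟨a, b, ha, hb, htl, hhd⟩ := (hP.isTH hv i).exists_endpoints_eq hxseg
  simp only [mem_insert_iff, mem_singleton_iff, not_or] at hxne
  refine ⟨a, b, ha.lt_of_ne' ?_, hb.lt_of_ne' ?_, htl, hhd⟩
  · rintro rfl
    exact hxne.1 (by rw [htl, zero_smul, sub_zero])
  · rintro rfl
    exact hxne.2 (by rw [hhd, zero_smul, add_zero])

lemma relintE_subset_edgeOf (hP : IsDOP d v p) (hv : Function.Antiperiodic v (d : ℤ)) (i : ℤ) :
    relintE d v p i ⊆ edgeOf d v p i := by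
  rw [(hP.isTH hv i).1]
  exact sdiff_subset

lemma straddles_of_mem_relintE (hP : IsDOP d v p) (hv : Function.Antiperiodic v (d : ℤ))
    (hx : x ∈ relintE d v p i) : Straddles (closure (DOPset d v p)) x (v i) := by
  obtain ⟨a, b, ha, hb, htl, hhd⟩ := hP.exists_endpoints_eq_of_mem_relintE hv hx
  refine ⟨-a, neg_lt_zero.2 ha, b, hb, ?_, ?_⟩
  · rw [neg_smul, ← sub_eq_add_neg, ← htl]
    exact (hP.tlPt_mem hv i).1
  · rw [← hhd]
    exact (hP.hdPt_mem hv i).1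

lemma edgeOf_eq_of_direction_eq_smul (hP : IsDOP d v p) (hv : Function.Antiperiodic v (d : ℤ))
    {μ : ℝ} (hμ : v j = μ • v i) (hxi : x ∈ edgeOf d v p i) (hxj : x ∈ edgeOf d v p j) :
    0 < μ ∧ edgeOf d v p j = edgeOf d v p i := by
  have hcross : ∀ y, cross2 y (v j) = μ * cross2 y (v i) := fun y => by
    rw [hμ, cross2_smul_right]
  have hpj : p j = μ * p i := by
    rw [← (mem_edgeOf.1 hxj).2, ← (mem_edgeOf.1 hxi).2, hcross]
  have hμ0 : 0 < μ := by
    obtain ⟨z, hz⟩ := hP.1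
    have hzi := hP.cross2_lt hv i hz
    have hzj := hP.cross2_lt hv j hz
    rw [hcross, hpj, ← sub_pos, ← mul_sub] at hzj
    exact pos_of_mul_pos_left hzj (sub_pos.2 hzi).le
  refine ⟨hμ0, ?_⟩
  ext y
  rw [mem_edgeOf, mem_edgeOf, hcross, hpj, mul_right_inj' hμ0.ne']

/-- If the directions were parallel, both edges would coincide with equal orientation, so the head
of the second would lie strictly beyond the head of the first. -/
lemma cross2_ne_zero_of_hdPt_eq_tlPt (hP : IsDOP d v p) (hv : Function.Antiperiodic v (d : ℤ))
    (hje : tlPt d v p j ≠ hdPt d v p j) (hc : hdPt d v p i = tlPt d v p j) :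
    cross2 (v i) (v j) ≠ 0 := by
  intro hzero
  have hvi := hP.direction_ne_zero hv i
  obtain ⟨μ, hμ⟩ := exists_eq_smul_of_cross2_eq_zero (u := v j) hvi
    (by rw [cross2_swap, hzero, neg_zero])
  obtain ⟨hμ0, hedge⟩ := hP.edgeOf_eq_of_direction_eq_smul hv hμ (hP.hdPt_mem hv i)
    (hc ▸ hP.tlPt_mem hv j)
  obtain ⟨-, b, -, hb, -, hhi⟩ := (hP.isTH hv i).exists_endpoints_eq (hedge ▸ hP.hdPt_mem hv j)
  obtain ⟨-, l, hl, hhj⟩ := hP.isTH hv j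
  have hl0 : l ≠ 0 := by
    rintro rfl
    exact hje (sub_eq_zero.1 (hhj.trans (zero_smul ℝ _))).symm
  have hsum : (b + l * μ) • v i = 0 := by
    rw [add_smul, mul_smul, ← hμ, ← hhj, ← hc, hhi]
    abel
  have hpos : 0 < b + l * μ := by positivity
  exact (smul_ne_zero hpos.ne' hvi) hsum

lemma lt_cross2_of_touch (hP : IsDOP d v p) (hv : Function.Antiperiodic v (d : ℤ))
    (hdis : Disjoint (DOPset d v p) (DOPset d v q)) (hx : x ∈ relintE d v p i)
    (hxq : x ∈ closure (DOPset d v q)) : ∀ y ∈ DOPset d v q, p i < cross2 y (v i) := by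
  have hpi := (mem_edgeOf.1 (hP.relintE_subset_edgeOf hv i hx)).2
  obtain ⟨z, hz⟩ := hP.1
  have hzi := hP.cross2_lt hv i hz
  simpa only [cross2_neg_right, neg_lt_neg_iff, hpi] using
    (hP.straddles_of_mem_relintE hv hx).neg.cross2_lt_of_disjoint (convex_DOPset d v p).closure
      (subset_closure hz) (by simpa only [cross2_neg_right, neg_lt_neg_iff, hpi] using hzi)
      (convex_DOPset d v q) (isOpen_DOPset d v q)
      (hdis.closure_left (isOpen_DOPset d v q)) hxq

lemma mem_edgeOf_opposite (hQ : IsDOP d v q) (hv : Function.Antiperiodic v (d : ℤ))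
    (habove : ∀ y ∈ DOPset d v q, cross2 x (v i) < cross2 y (v i))
    (hxq : x ∈ closure (DOPset d v q)) : x ∈ edgeOf d v q (i + d) := by
  refine mem_edgeOf.2 ⟨hxq, le_antisymm ?_ ?_⟩
  · exact cross2_le_of_mem_closure (fun y hy => (hQ.cross2_lt hv (i + d) hy).le) hxq
  · obtain ⟨y, hy⟩ := hQ.edgeOf_nonempty hv (i + d)
    rw [mem_edgeOf] at hy
    rw [← hy.2, hv i, cross2_neg_right, cross2_neg_right, neg_le_neg_iff]
    exact le_cross2_of_mem_closure (fun y hy => (habove y hy).le) hy.1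

lemma exists_opposite_endpoints_eq (hQ : IsDOP d v q) (hv : Function.Antiperiodic v (d : ℤ))
    (hx : x ∈ edgeOf d v q (i + d)) :
    ∃ a b : ℝ, 0 ≤ a ∧ 0 ≤ b ∧
      tlPt d v q (i + d) = x + a • v i ∧ hdPt d v q (i + d) = x - b • v i := by
  obtain ⟨a, b, ha, hb, htl, hhd⟩ := (hQ.isTH hv (i + d)).exists_endpoints_eq hx
  rw [hv i, smul_neg] at htl hhd
  exact ⟨a, b, ha, hb, by rw [htl, sub_neg_eq_add], by rw [hhd, sub_eq_add_neg]⟩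

lemma seesOpt_head_or_straddles (hP : IsDOP d v p) (hQ : IsDOP d v q)
    (hv : Function.Antiperiodic v (d : ℤ)) (hne : tlPt d v p i ≠ hdPt d v p i)
    (hx : x ∈ relintE d v p i) (hxq : x ∈ edgeOf d v q (i + d)) :
    SeesOpt d v p q i true ∨ Straddles (closure (DOPset d v q)) (hdPt d v p i) (v i) := by
  obtain ⟨a, b, ha, hb, htl, hhd⟩ := hP.exists_endpoints_eq_of_mem_relintE hv hx
  obtain ⟨s, -, hs, -, htl', -⟩ := hQ.exists_opposite_endpoints_eq hv hxq
  rcases lt_trichotomy s b with hsb | rfl | hbs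
  · refine .inl ⟨hne, .inl ?_⟩
    rw [if_pos rfl, relintE_eq_openSegment hne, htl, hhd, htl', sub_eq_add_neg, ← neg_smul]
    exact add_smul_mem_openSegment x (v i) (by linarith) hsb
  · exact .inl ⟨hne, .inr (htl'.trans hhd.symm)⟩
  · refine .inr ⟨-b, neg_lt_zero.2 hb, s - b, sub_pos.2 hbs, ?_, ?_⟩
    · rw [hhd, neg_smul, add_neg_cancel_right]
      exact hxq.1
    · rw [hhd, sub_smul, add_add_sub_cancel, ← htl']
      exact (hQ.tlPt_mem hv (i + d)).1

lemma seesOpt_tail_or_straddles (hP : IsDOP d v p) (hQ : IsDOP d v q)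
    (hv : Function.Antiperiodic v (d : ℤ)) (hne : tlPt d v p i ≠ hdPt d v p i)
    (hx : x ∈ relintE d v p i) (hxq : x ∈ edgeOf d v q (i + d)) :
    SeesOpt d v p q i false ∨ Straddles (closure (DOPset d v q)) (tlPt d v p i) (v i) := by
  obtain ⟨a, b, ha, hb, htl, hhd⟩ := hP.exists_endpoints_eq_of_mem_relintE hv hx
  obtain ⟨-, t, -, ht, -, hhd'⟩ := hQ.exists_opposite_endpoints_eq hv hxq
  rcases lt_trichotomy t a with hta | rfl | hat
  · refine .inl ⟨hne, .inl ?_⟩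
    rw [if_neg Bool.false_ne_true, relintE_eq_openSegment hne, htl, hhd, hhd', sub_eq_add_neg,
      sub_eq_add_neg, ← neg_smul, ← neg_smul]
    exact add_smul_mem_openSegment x (v i) (neg_lt_neg hta) (by linarith)
  · exact .inl ⟨hne, .inr (hhd'.trans htl.symm)⟩
  · refine .inr ⟨a - t, sub_neg.2 hat, a, ha, ?_, ?_⟩
    · rw [htl, sub_smul, sub_add_sub_cancel, ← hhd']
      exact (hQ.hdPt_mem hv (i + d)).1
    · rw [htl, sub_add_cancel]
      exact hxq.1

lemma forall_cross2_le_of_mem_frontier (hP : IsDOP d v p) (hv : Function.Antiperiodic v (d : ℤ))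
    {C : Set Pt} (hC : Convex ℝ C) (hsub : closure (DOPset d v p) ⊆ C)
    (hx : x ∈ relintE d v p i) (hxC : x ∈ frontier C) : ∀ y ∈ C, cross2 y (v i) ≤ p i := by
  obtain ⟨z, hz⟩ := hP.1
  have hzC : z ∈ interior C :=
    interior_maximal (subset_closure.trans hsub) (isOpen_DOPset d v p) hz
  have hzi := hP.cross2_lt hv i hz
  rw [← (mem_edgeOf.1 (hP.relintE_subset_edgeOf hv i hx)).2] at hzi ⊢
  exact ((hP.straddles_of_mem_relintE hv hx).mono hsub).cross2_le_of_notMem_interior hC hzC hzi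
    hxC.2

lemma edgeOf_subset_frontier (hP : IsDOP d v p) (hv : Function.Antiperiodic v (d : ℤ))
    {C : Set Pt} (hsub : closure (DOPset d v p) ⊆ C) (hle : ∀ y ∈ C, cross2 y (v i) ≤ p i) :
    edgeOf d v p i ⊆ frontier C := by
  intro y hy
  obtain ⟨z, hz⟩ := hP.1
  have hzi := hP.cross2_lt hv i hz
  rw [← (mem_edgeOf.1 hy).2] at hle hzi
  exact mem_frontier_of_forall_cross2_le (hsub hy.1) hle hzi

end IsDOP

end Polygons

section Packing

variable {d : ℕ} {v : ℤ → Pt} {OPT : Set (ℤ → ℝ)} {Cstar : Set Pt} {p : ℤ → ℝ} {i : ℤ}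

/-- `q` passes `c` behind the edge `e_i(P)`: it lies beyond the line of that edge, and its closure
contains points of this line on both sides of `c`. It is the situation at an endpoint `c` of
`e_i(P)` when `q` touches `relint(e_i(P))` and `P` does not see `q` towards `c`. -/
def PassesBehind (d : ℕ) (v : ℤ → Pt) (p q : ℤ → ℝ) (i : ℤ) (c : Pt) : Prop :=
  (∀ y ∈ DOPset d v q, p i < cross2 y (v i)) ∧ Straddles (closure (DOPset d v q)) c (v i)

lemma accountable_or_passesBehind_or_forall_cross2_le (hv : Function.Antiperiodic v (d : ℤ))
    (hCconv : Convex ℝ Cstar) (hDOP : ∀ p ∈ OPT, IsDOP d v p) (hind : Indep d v OPT)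
    (hsub : ∀ p ∈ OPT, closure (DOPset d v p) ⊆ Cstar) (hE4 : E4cond d v OPT Cstar)
    (hp : p ∈ OPT) (hi : i ∈ Finset.Icc (1 : ℤ) (2 * (d : ℤ)))
    (hne : tlPt d v p i ≠ hdPt d v p i) :
    ((Accountable d v OPT p i true ∨ ∃ q ∈ OPT, PassesBehind d v p q i (hdPt d v p i)) ∧
      (Accountable d v OPT p i false ∨ ∃ q ∈ OPT, PassesBehind d v p q i (tlPt d v p i))) ∨
    ∀ y ∈ Cstar, cross2 y (v i) ≤ p i := by
  have hP := hDOP p hp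
  rcases hE4 p hp i hi hne with ⟨q, hq, hqp, x, hx, hxq⟩ | ⟨x, hx, hxC⟩
  · have hQ := hDOP q hq
    have hdis := hind.disjoint hp hq (by rintro rfl; exact hqp rfl)
    have habove := hP.lt_cross2_of_touch hv hdis hx hxq.1
    have hxi := (mem_edgeOf.1 (hP.relintE_subset_edgeOf hv i hx)).2
    have hxe := hQ.mem_edgeOf_opposite hv (hxi ▸ habove) hxq.1
    exact .inl
      ⟨(hP.seesOpt_head_or_straddles hQ hv hne hx hxe).imp (⟨q, hq, ·⟩) (⟨q, hq, habove, ·⟩),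
        (hP.seesOpt_tail_or_straddles hQ hv hne hx hxe).imp (⟨q, hq, ·⟩) (⟨q, hq, habove, ·⟩)⟩
  · exact .inr (hP.forall_cross2_le_of_mem_frontier hv hCconv (hsub p hp) hx hxC)

lemma not_passesBehind_of_passesBehind {q r : ℤ → ℝ} {j : ℤ} {c : Pt}
    (hDOP : ∀ p ∈ OPT, IsDOP d v p) (hind : Indep d v OPT) (hq : q ∈ OPT) (hr : r ∈ OPT)
    (hci : cross2 c (v i) = p i) (hij : cross2 (v i) (v j) ≠ 0)
    (hqi : PassesBehind d v p q i c) : ¬ PassesBehind d v p r j c := by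
  rintro ⟨-, hstr⟩
  obtain ⟨habove, hstq⟩ := hqi
  have hji : cross2 (v j) (v i) ≠ 0 := by
    rw [cross2_swap]
    exact neg_ne_zero.2 hij
  by_cases hqr : q = r
  · subst hqr
    obtain ⟨y, hy, hyc⟩ := hstr.exists_cross2_lt hji
    exact (habove y hy).not_gt (hci ▸ hyc)
  · obtain ⟨z, hz⟩ := (hDOP q hq).1
    have hdis := (hind.disjoint hq hr hqr).closure_left (isOpen_DOPset d v r)
    have hbelow := hstq.cross2_lt_of_disjoint (convex_DOPset d v q).closure (subset_closure hz)
      (hci ▸ habove z hz) (convex_DOPset d v r) (isOpen_DOPset d v r) hdis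
      (hstr.mem (convex_DOPset d v r).closure)
    obtain ⟨y, hy, hcy⟩ := hstr.exists_lt_cross2 hji
    exact (hbelow y hy).not_gt hcy

end Packing

theorem stmt4_general {d : ℕ} {v : ℤ → Pt} (hv : Function.Antiperiodic v (d : ℤ))
    {Cstar : Set Pt} (hCconv : Convex ℝ Cstar)
    {OPT : Set (ℤ → ℝ)} (hDOP : ∀ p ∈ OPT, IsDOP d v p) (hind : Indep d v OPT)
    (hsub : ∀ p ∈ OPT, closure (DOPset d v p) ⊆ Cstar) (hE4 : E4cond d v OPT Cstar)
    {p : ℤ → ℝ} (hp : p ∈ OPT) {i j : ℤ} (hi : i ∈ Finset.Icc (1 : ℤ) (2 * (d : ℤ)))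
    (hj : j ∈ Finset.Icc (1 : ℤ) (2 * (d : ℤ)))
    (hie : tlPt d v p i ≠ hdPt d v p i) (hje : tlPt d v p j ≠ hdPt d v p j)
    (hc : hdPt d v p i = tlPt d v p j)
    (hnb : ¬ edgeOf d v p i ⊆ frontier Cstar ∨ ¬ edgeOf d v p j ⊆ frontier Cstar) :
    Accountable d v OPT p i true ∨ Accountable d v OPT p j false := by
  have hP := hDOP p hp
  have hij := hP.cross2_ne_zero_of_hdPt_eq_tlPt hv hje hc
  have hci := (mem_edgeOf.1 (hP.hdPt_mem hv i)).2
  have hcj := (mem_edgeOf.1 (hP.tlPt_mem hv j)).2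
  have hji : cross2 (v j) (v i) ≠ 0 := by rwa [cross2_swap, neg_ne_zero]
  by_contra hcon
  obtain ⟨hni, hnj⟩ := not_or.1 hcon
  have hi' := (accountable_or_passesBehind_or_forall_cross2_le hv hCconv hDOP hind hsub hE4 hp
    hi hie).imp_left fun h => h.1.resolve_left hni
  have hj' := (accountable_or_passesBehind_or_forall_cross2_le hv hCconv hDOP hind hsub hE4 hp
    hj hje).imp_left fun h => h.2.resolve_left hnj
  rw [← hc] at hcj hj'
  rcases hi' with ⟨q, hq, hqi⟩ | hCi <;> rcases hj' with ⟨r, hr, hrj⟩ | hCj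
  · exact not_passesBehind_of_passesBehind hDOP hind hq hr hci hij hqi hrj
  · obtain ⟨y, hy, hcy⟩ := hqi.2.exists_lt_cross2 hij
    exact (hCj y (hsub q hq (subset_closure hy))).not_gt (hcj ▸ hcy)
  · obtain ⟨y, hy, hcy⟩ := hrj.2.exists_lt_cross2 hji
    exact (hCi y (hsub r hr (subset_closure hy))).not_gt (hci ▸ hcy)
  · exact hnb.elim (· (hP.edgeOf_subset_frontier hv (hsub p hp) hCi))
      (· (hP.edgeOf_subset_frontier hv (hsub p hp) hCj))

/-- Let `P ∈ OPT` and `c` a point with `c = h(e) = t(e')` for two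
non-degenerate edges `e = e_i(P)`, `e' = e_j(P)` with `i ≠ j`. If `e ⊄ ∂C*` or
`e' ⊄ ∂C*`, then `P` is accountable w.r.t. `(v_i, h)` or w.r.t. `(v_j, t)`. -/
theorem stmt4 (d : ℕ) (v : ℤ → Pt) (hv : DirOK d v)
    (Cstar : Set Pt) (hCcomp : IsCompact Cstar) (hCconv : Convex ℝ Cstar)
    (hCint : (interior Cstar).Nonempty)
    (OPT : Set (ℤ → ℝ)) (hDOP : ∀ p ∈ OPT, IsDOP d v p) (hind : Indep d v OPT)
    (hsub : ∀ p ∈ OPT, closure (DOPset d v p) ⊆ Cstar)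
    (hE4 : E4cond d v OPT Cstar)
    (p : ℤ → ℝ) (hp : p ∈ OPT)
    (i j : ℤ) (hi : i ∈ Finset.Icc (1 : ℤ) (2 * (d : ℤ)))
    (hj : j ∈ Finset.Icc (1 : ℤ) (2 * (d : ℤ))) (hij : i ≠ j)
    (hie : tlPt d v p i ≠ hdPt d v p i) (hje : tlPt d v p j ≠ hdPt d v p j)
    (c : Pt) (hch : c = hdPt d v p i) (hct : c = tlPt d v p j)
    (hnb : ¬ edgeOf d v p i ⊆ frontier Cstar ∨ ¬ edgeOf d v p j ⊆ frontier Cstar) :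
    Accountable d v OPT p i true ∨ Accountable d v OPT p j false :=
  stmt4_general hv.2.2.1 hCconv hDOP hind hsub hE4 hp hi hj hie hje (hch.symm.trans hct) hnb
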